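/- Let V ⊆ ℝⁿ, V_i ⊆ ℝ^{m_i}, and V_j ⊆ ℝ^{m_j} be subsets, and let φ_i : ℝⁿ → ℝ^{m_i} and φ_j : ℝⁿ → ℝ^{m_j} be maps that are locally smoothly extendable on V, restrict to bijections of V onto V_i and of V onto V_j respectively, and admit maps σ_i : ℝ^{m_i} → ℝⁿ and σ_j : ℝ^{m_j} → ℝⁿ locally smoothly extendable on V_i and V_j respectively with σ_i(φ_i(x)) = x and σ_j(φ_j(x)) = x for all x ∈ V. Then the transition map φ_i ∘ σ_j is locally smoothly extendable on V_j: for every z ∈ V_j there exist an open set W ⊆ ℝ^{m_j} with z ∈ W and a C^∞ map Φ : ℝ^{m_j} → ℝ^{m_i} agreeing with φ_i ∘ σ_j on W ∩ V_j. -/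

import Mathlib

/-- A function `f : ℝⁿ → ℝ` is locally smoothly extendable on `V ⊆ ℝⁿ` if
for every `x ∈ V` there are an open set `W ∋ x` and a `C^∞` function
`F : ℝⁿ → ℝ` with `f = F` on `W ∩ V`. -/
def LocSmoothExtFun {n : ℕ} (V : Set (Fin n → ℝ)) (f : (Fin n → ℝ) → ℝ) : Prop :=
  ∀ x ∈ V, ∃ W : Set (Fin n → ℝ), IsOpen W ∧ x ∈ W ∧
    ∃ F : (Fin n → ℝ) → ℝ, ContDiff ℝ (⊤ : ℕ∞) F ∧ ∀ y ∈ W ∩ V, f y = F y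

/-- A map `ψ : ℝⁿ → ℝᵐ` is locally smoothly extendable on `V ⊆ ℝⁿ` if
for every `x ∈ V` there are an open set `W ∋ x` and a `C^∞` map
`Ψ : ℝⁿ → ℝᵐ` with `ψ = Ψ` on `W ∩ V`. -/
def LocSmoothExtMap {n m : ℕ} (V : Set (Fin n → ℝ))
    (ψ : (Fin n → ℝ) → (Fin m → ℝ)) : Prop :=
  ∀ x ∈ V, ∃ W : Set (Fin n → ℝ), IsOpen W ∧ x ∈ W ∧
    ∃ Ψ : (Fin n → ℝ) → (Fin m → ℝ), ContDiff ℝ (⊤ : ℕ∞) Ψ ∧ ∀ y ∈ W ∩ V, ψ y = Ψ y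

/-!
If `f'` extends `f` near `x` and `g'` extends `g` near `f x`, then `g' ∘ f'` extends `g ∘ f` near
`x`: `f` agrees with the continuous map `f'` on its domain, so it sends points of the domain
near `x` to points near `f x`, where `g = g'`. This applies to `φi ∘ σj` because `σj`,
inverting `φj` on `V`, maps `Vj = φj(V)` back into `V`.
-/

open Set Filter Topology
open scoped ContDiff

section Extendable

variable {𝕜 : Type*} [NontriviallyNormedField 𝕜]
  {E : Type*} [NormedAddCommGroup E] [NormedSpace 𝕜 E]
  {F : Type*} [NormedAddCommGroup F] [NormedSpace 𝕜 F]
  {G : Type*} [NormedAddCommGroup G] [NormedSpace 𝕜 G]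

variable (𝕜) in
/-- Near `x`, the restriction of `f` to `s` extends to a `C^k` map. The extension is defined and
`C^k` on the whole space, and agreement near `x` within `s` is expressed by the filter `𝓝[s] x`. -/
def ContDiffExtendableWithinAt (k : WithTop ℕ∞) (f : E → F) (s : Set E) (x : E) : Prop :=
  ∃ f' : E → F, ContDiff 𝕜 k f' ∧ f =ᶠ[𝓝[s] x] f'

variable (𝕜) in
/-- The restriction of `f` to `s` extends locally to `C^k` maps: this is the notion of morphism
between subsets of normed spaces, generalizing `LocSmoothExtMap` to any regularity `k`. -/
def ContDiffExtendableOn (k : WithTop ℕ∞) (f : E → F) (s : Set E) : Prop :=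
  ∀ x ∈ s, ContDiffExtendableWithinAt 𝕜 k f s x

variable {k : WithTop ℕ∞} {f : E → F} {g : F → G} {s : Set E} {t : Set F} {x : E}

theorem ContDiffExtendableWithinAt.continuousWithinAt
    (hf : ContDiffExtendableWithinAt 𝕜 k f s x) (hx : x ∈ s) : ContinuousWithinAt f s x := by
  obtain ⟨f', hf', hff'⟩ := hf
  exact hf'.continuous.continuousWithinAt.congr_of_eventuallyEq_of_mem hff' hx

theorem ContDiffExtendableWithinAt.comp (hg : ContDiffExtendableWithinAt 𝕜 k g t (f x))
    (hf : ContDiffExtendableWithinAt 𝕜 k f s x) (hst : MapsTo f s t) (hx : x ∈ s) :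
    ContDiffExtendableWithinAt 𝕜 k (g ∘ f) s x := by
  have hf_tendsto : Tendsto f (𝓝[s] x) (𝓝[t] (f x)) :=
    (hf.continuousWithinAt hx).tendsto_nhdsWithin hst
  obtain ⟨f', hf', hff'⟩ := hf
  obtain ⟨g', hg', hgg'⟩ := hg
  refine ⟨g' ∘ f', hg'.comp hf', ?_⟩
  calc
    g ∘ f =ᶠ[𝓝[s] x] g' ∘ f := hgg'.comp_tendsto hf_tendsto
    _ =ᶠ[𝓝[s] x] g' ∘ f' := hff'.fun_comp g'

theorem ContDiffExtendableOn.comp (hg : ContDiffExtendableOn 𝕜 k g t)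
    (hf : ContDiffExtendableOn 𝕜 k f s) (hst : MapsTo f s t) :
    ContDiffExtendableOn 𝕜 k (g ∘ f) s :=
  fun x hx => (hg (f x) (hst hx)).comp (hf x hx) hst hx

theorem stmt_3_general {V : Set E} {Vj : Set F} {φi : E → G} {φj : E → F} {σj : F → E}
    (hφi : ContDiffExtendableOn 𝕜 k φi V) (hσj : ContDiffExtendableOn 𝕜 k σj Vj)
    (hsurj : SurjOn φj V Vj) (hlj : LeftInvOn σj φj V) :
    ContDiffExtendableOn 𝕜 k (φi ∘ σj) Vj :=
  hφi.comp hσj (hlj.mapsTo hsurj)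

end Extendable

theorem locSmoothExtMap_iff_contDiffExtendableOn {n m : ℕ} {V : Set (Fin n → ℝ)}
    {ψ : (Fin n → ℝ) → (Fin m → ℝ)} :
    LocSmoothExtMap V ψ ↔ ContDiffExtendableOn ℝ ∞ ψ V := by
  refine forall₂_congr fun x _ => ⟨?_, ?_⟩
  · rintro ⟨W, hW, hxW, Ψ, hΨ, heq⟩
    exact ⟨Ψ, hΨ, mem_nhdsWithin.2 ⟨W, hW, hxW, heq⟩⟩
  · rintro ⟨Ψ, hΨ, heq⟩
    obtain ⟨W, hW, hxW, hsub⟩ := mem_nhdsWithin.1 heq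
    exact ⟨W, hW, hxW, Ψ, hΨ, hsub⟩

/-- Chart transition maps between two charts of a differential subspace of
`ℝⁿ` are locally smoothly extendable (Proposition 2(a)). -/
theorem stmt_3 {n mi mj : ℕ} (V : Set (Fin n → ℝ))
    (Vi : Set (Fin mi → ℝ)) (Vj : Set (Fin mj → ℝ))
    (φi : (Fin n → ℝ) → (Fin mi → ℝ)) (φj : (Fin n → ℝ) → (Fin mj → ℝ))
    (hφi : LocSmoothExtMap V φi) (hφj : LocSmoothExtMap V φj)
    (hbi : Set.BijOn φi V Vi) (hbj : Set.BijOn φj V Vj)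
    (σi : (Fin mi → ℝ) → (Fin n → ℝ)) (σj : (Fin mj → ℝ) → (Fin n → ℝ))
    (hσi : LocSmoothExtMap Vi σi) (hσj : LocSmoothExtMap Vj σj)
    (hli : ∀ x ∈ V, σi (φi x) = x) (hlj : ∀ x ∈ V, σj (φj x) = x) :
    ∀ z ∈ Vj, ∃ W : Set (Fin mj → ℝ), IsOpen W ∧ z ∈ W ∧
      ∃ Φ : (Fin mj → ℝ) → (Fin mi → ℝ), ContDiff ℝ (⊤ : ℕ∞) Φ ∧
        ∀ y ∈ W ∩ Vj, (φi ∘ σj) y = Φ y :=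
  locSmoothExtMap_iff_contDiffExtendableOn.2 <|
    stmt_3_general (locSmoothExtMap_iff_contDiffExtendableOn.1 hφi)
      (locSmoothExtMap_iff_contDiffExtendableOn.1 hσj) hbj.surjOn hlj
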